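/- For each nonnegative integer j there exists a constant C > 0 such that for all t > 0: ‖∂_y^{j+1}K₁(t,·)‖_{L¹(ℝ)} + ‖∂_y^j K₂(t,·)‖_{L¹(ℝ)} + ‖∂_y^{j+2}K₃(t,·)‖_{L¹(ℝ)} ≤ C⟨t⟩^{−(j+1)/2}. -/

import Mathlib

/-!
Differentiating `K₁`, `K₂`, `K₃` respectively `j + 1`, `j`, `j + 2` times multiplies the symbols by
powers of `iη`, and in all three cases the resulting symbol is a combination of
`η ^ (j + 1) · a(η) · e^{-2tη²} · e^{±itηω(η)}` with `a` smooth and compactly supported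
(`a = χ`, `χ/ω`, `χω`). Write `ηω(η) = 4η + η(ω(η) - 4)`: the factor `e^{±4itη}` only translates the
kernel, which does not affect its `L¹` norm, and what remains is `e^{tP(η)}` with `Re P = -2η²` and
`P' = ηq`, `q` smooth, because `ω - 4 = O(η²)`.

For a symbol `f = ηⁿ a e^{tP}` put `S = √(1 + t)`. As `a` has compact support, `e^{-2tη²}` is
comparable to `e^{-2S²η²}` there, uniformly in `t > 0`, so `‖f‖₁ ≲ S^{-(n+1)}` (`sym_L1`). Each
derivative either removes a power of `η` or produces `tη` (`sym_deriv`), and so costs at most a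
factor `S`; hence `‖f''‖₁ ≲ S² S^{-(n+1)}`. Two integrations by parts then give
`|∫ f e^{iηy} dη| ≲ S^{-(n+1)} (1 + (y/S)²)⁻¹`, whose integral in `y` is `≲ S^{-n}`
(`FI_L1_le`, `sym_kernel_L1`). With `n = j + 1` this is the claim, since `⟨t⟩ ≤ S²`.
-/

open MeasureTheory

noncomputable section

/-- The Japanese bracket `⟨x⟩ = √(1+x²)`. -/
def jb (x : ℝ) : ℝ := Real.sqrt (1 + x ^ 2)

/-- `μ₃ = 1/2 + π²/24`. -/
def mu3 : ℝ := 1 / 2 + Real.pi ^ 2 / 24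

/-- `ω(η) = √(16 + (8μ₃ − 1)η²)`. -/
def omg (η : ℝ) : ℝ := Real.sqrt (16 + (8 * mu3 - 1) * η ^ 2)

/-- `(2π)^{-1/2}·ℱ⁻¹[g](y) = (2π)^{-1} ∫ g(η) e^{iyη} dη`, where `ℱ⁻¹` is the inverse
Fourier transform with the convention `ℱ⁻¹g(y) = (2π)^{-1/2} ∫ g(η) e^{iyη} dη`. -/
def Kft (g : ℝ → ℝ) (y : ℝ) : ℂ :=
  (2 * Real.pi : ℂ)⁻¹ * ∫ η : ℝ, (g η : ℂ) * Complex.exp (Complex.I * ((η * y : ℝ) : ℂ))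

/-- `K₁(t,y) = (2π)^{-1/2}·ℱ⁻¹[χ₁(η) e^{-2tη²} cos(tηω(η))](y)`. -/
def K1 (χ : ℝ → ℝ) (t : ℝ) : ℝ → ℂ :=
  Kft fun η => χ η * Real.exp (-2 * t * η ^ 2) * Real.cos (t * η * omg η)

/-- `K₂(t,y) = (2π)^{-1/2}·ℱ⁻¹[e^{-2tη²} (ηχ₁(η)/ω(η)) sin(tηω(η))](y)`. -/
def K2 (χ : ℝ → ℝ) (t : ℝ) : ℝ → ℂ :=
  Kft fun η => Real.exp (-2 * t * η ^ 2) * (η * χ η / omg η) * Real.sin (t * η * omg η)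

/-- `K₃(t,y) = (2π)^{-1/2}·ℱ⁻¹[e^{-2tη²} (χ₁(η)ω(η)/η) sin(tηω(η))](y)`. -/
def K3 (χ : ℝ → ℝ) (t : ℝ) : ℝ → ℂ :=
  Kft fun η => Real.exp (-2 * t * η ^ 2) * (χ η * omg η / η) * Real.sin (t * η * omg η)

/-- `χ` is a smooth cutoff adapted to `η₀`: `0 ≤ χ ≤ 1`, `χ = 1` on `{|η| ≤ η₀/2}` and
`χ = 0` on `{|η| ≥ 3η₀/4}`. -/
def IsCutoff (η₀ : ℝ) (χ : ℝ → ℝ) : Prop :=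
  ContDiff ℝ (⊤ : ℕ∞) χ ∧ (∀ η : ℝ, 0 ≤ χ η ∧ χ η ≤ 1) ∧
    (∀ η : ℝ, |η| ≤ η₀ / 2 → χ η = 1) ∧ (∀ η : ℝ, 3 * η₀ / 4 ≤ |η| → χ η = 0)

/-- The `L¹(ℝ)` norm of a complex-valued function. -/
def L1norm (f : ℝ → ℂ) : ℝ := ∫ y : ℝ, ‖f y‖

/-- The `L²(ℝ)` norm of a complex-valued function. -/
def L2norm (f : ℝ → ℂ) : ℝ := Real.sqrt (∫ y : ℝ, ‖f y‖ ^ 2)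

open scoped ContDiff FourierTransform

/-! ### Fourier integrals -/

/-- The Fourier integral `∫ f(η) e^{iηy} dη` of a complex-valued symbol. -/
def FI (f : ℝ → ℂ) (y : ℝ) : ℂ :=
  ∫ η : ℝ, f η * Complex.exp (Complex.I * ((η * y : ℝ) : ℂ))

lemma FI_eq_fourier (f : ℝ → ℂ) (y : ℝ) : FI f y = 𝓕 f (-(2 * Real.pi)⁻¹ * y) := by
  rw [Real.fourier_real_eq_integral_exp_smul]
  unfold FI
  congr 1
  ext η
  rw [smul_eq_mul, mul_comm]
  congr 2
  have : (Real.pi : ℂ) ≠ 0 := by exact_mod_cast Real.pi_ne_zero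
  push_cast
  field_simp

lemma FI_continuous {f : ℝ → ℂ} (hf : Integrable f) : Continuous (FI f) := by
  rw [funext (FI_eq_fourier f)]
  have h : Continuous (𝓕 f) :=
    VectorFourier.fourierIntegral_continuous Real.continuous_fourierChar
      (by exact continuous_inner) hf
  exact h.comp (by fun_prop)

lemma FI_norm_le (f : ℝ → ℂ) (y : ℝ) : ‖FI f y‖ ≤ ∫ η, ‖f η‖ := by
  refine (norm_integral_le_integral_norm _).trans (le_of_eq ?_)
  congr 1
  ext η
  rw [norm_mul, mul_comm Complex.I, Complex.norm_exp_ofReal_mul_I, mul_one]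

lemma FI_deriv {f f' : ℝ → ℂ} (hf : Integrable f) (hf' : Integrable f')
    (hd : ∀ η, HasDerivAt f (f' η) η) (y : ℝ) :
    FI f' y = -(Complex.I * y) * FI f y := by
  have e : deriv f = f' := funext fun η => (hd η).deriv
  rw [FI_eq_fourier, FI_eq_fourier, ← e,
    Real.fourier_deriv hf (fun η => (hd η).differentiableAt) (e ▸ hf')]
  beta_reduce
  rw [smul_eq_mul]
  have : (Real.pi : ℂ) ≠ 0 := by exact_mod_cast Real.pi_ne_zero
  push_cast
  field_simp

/-- Differentiation under the Fourier integral, for a bounded compactly supported symbol that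
need not be continuous. -/
lemma iteratedDeriv_Kft {g : ℝ → ℝ} (hm : Measurable g) {M R : ℝ} (hb : ∀ η, |g η| ≤ M)
    (hs : ∀ η, R ≤ |η| → g η = 0) (k : ℕ) (y : ℝ) :
    iteratedDeriv k (Kft g) y =
      (2 * Real.pi : ℂ)⁻¹ * FI (fun η => (Complex.I * η) ^ k * (g η : ℂ)) y := by
  have hM : 0 ≤ M := (abs_nonneg _).trans (hb 0)
  have hint : ∀ n : ℕ, Integrable (fun η : ℝ => η ^ n • (g η : ℂ)) := by
    intro n
    have hI : IntegrableOn (fun η : ℝ => |R| ^ n * M) (Set.Icc (-|R|) |R|) :=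
      integrableOn_const (by simp)
    refine Integrable.mono' ((integrable_indicator_iff measurableSet_Icc).2 hI)
      (by fun_prop) (Filter.Eventually.of_forall fun η => ?_)
    by_cases h : η ∈ Set.Icc (-|R|) |R|
    · rw [Set.indicator_of_mem h, norm_smul, Complex.norm_real, norm_pow, Real.norm_eq_abs,
        Real.norm_eq_abs]
      have := abs_le.2 ⟨h.1, h.2⟩
      gcongr
      exact hb η
    · rw [Set.indicator_of_notMem h, hs η]
      · simp
      · by_contra! h'
        exact h (abs_le.1 (h'.le.trans (le_abs_self R)))
  have hcd : ContDiff ℝ k (𝓕 (fun η => (g η : ℂ))) := by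
    refine Real.contDiff_fourier (N := (k : ℕ∞)) fun n _ => ?_
    simpa [norm_smul] using (hint n).norm
  have e : Kft g = fun y => (2 * Real.pi : ℂ)⁻¹ * (fun y =>
      𝓕 (fun η => (g η : ℂ)) (-(2 * Real.pi)⁻¹ * y)) y := by
    ext y
    beta_reduce
    rw [← FI_eq_fourier]
    rfl
  rw [e, iteratedDeriv_const_mul_field, iteratedDeriv_comp_const_smul hcd,
    Real.iteratedDeriv_fourier (N := (k : ℕ∞)) (fun n _ => hint n) le_rfl]
  beta_reduce
  rw [← FI_eq_fourier]
  simp only [FI]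
  rw [← integral_smul]
  congr 2
  ext η
  have : (Real.pi : ℂ) ≠ 0 := by exact_mod_cast Real.pi_ne_zero
  rw [Complex.real_smul, smul_eq_mul, ← mul_assoc, ← mul_assoc]
  congr 2
  push_cast
  rw [← mul_pow]
  congr 1
  field_simp

/-- If `‖f‖₁ ≤ A` and `‖f''‖₁ ≤ A S²`, then `|∫ f e^{iηy}| ≤ 2A (1 + (y/S)²)⁻¹`, which integrates
to `2πAS`. -/
lemma FI_L1_le {f f' f'' : ℝ → ℂ} (hf : Integrable f) (hf' : Integrable f') (hf'' : Integrable f'')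
    (hd : ∀ η, HasDerivAt f (f' η) η) (hd' : ∀ η, HasDerivAt f' (f'' η) η) {A S : ℝ} (hS : 0 < S)
    (h0 : ∫ η, ‖f η‖ ≤ A) (h2 : ∫ η, ‖f'' η‖ ≤ A * S ^ 2) :
    Integrable (FI f) ∧ ∫ y, ‖FI f y‖ ≤ 2 * Real.pi * A * S := by
  have hp : ∀ y, ‖FI f y‖ ≤ 2 * A * (1 + (y / S) ^ 2)⁻¹ := by
    intro y
    have e : FI f'' y = -(y : ℂ) ^ 2 * FI f y := by
      rw [FI_deriv hf' hf'' hd', FI_deriv hf hf' hd]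
      linear_combination ((y : ℂ) ^ 2 * FI f y) * Complex.I_sq
    have a := (FI_norm_le f y).trans h0
    have b := (FI_norm_le f'' y).trans h2
    rw [e, norm_mul, norm_neg, norm_pow, Complex.norm_real, Real.norm_eq_abs, sq_abs] at b
    rw [← div_eq_mul_inv, le_div_iff₀ (by positivity), div_pow]
    have : ‖FI f y‖ * (y ^ 2 / S ^ 2) ≤ A := by
      rw [← mul_div_assoc, div_le_iff₀ (by positivity)]
      linarith
    linarith
  have hi : Integrable fun y : ℝ => 2 * A * (1 + (y / S) ^ 2)⁻¹ :=
    (integrable_inv_one_add_sq.comp_div hS.ne').const_mul _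
  have hI : Integrable (FI f) :=
    hi.mono' (FI_continuous hf).aestronglyMeasurable (Filter.Eventually.of_forall hp)
  refine ⟨hI, (integral_mono hI.norm hi hp).trans (le_of_eq ?_)⟩
  rw [integral_const_mul, Measure.integral_comp_div (fun y : ℝ => (1 + y ^ 2)⁻¹) S,
    integral_univ_inv_one_add_sq, abs_of_pos hS, smul_eq_mul]
  ring

/-! ### Symbols with a Gaussian factor -/

/-- The symbol `η ^ n · a(η) · e^{tP(η)}`. -/
def sym (P : ℝ → ℂ) (n : ℕ) (a : ℝ → ℂ) (t : ℝ) (η : ℝ) : ℂ :=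
  (η : ℂ) ^ n * a η * Complex.exp (t * P η)

lemma pow_le_exp_sq (n : ℕ) {x : ℝ} (hx : 0 ≤ x) :
    x ^ n ≤ n.factorial * Real.exp 1 * Real.exp (x ^ 2) := by
  have h := Real.pow_div_factorial_le_exp x hx n
  rw [div_le_iff₀ (by positivity)] at h
  have h2 : Real.exp x ≤ Real.exp 1 * Real.exp (x ^ 2) := by
    rw [← Real.exp_add]
    exact Real.exp_le_exp.2 (by nlinarith)
  calc x ^ n ≤ Real.exp x * n.factorial := h
    _ ≤ (Real.exp 1 * Real.exp (x ^ 2)) * n.factorial := by gcongr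
    _ = _ := by ring

/-- On the compact support of `a` the factor `e^{2η²}` is bounded, so `e^{-2tη²}` may be replaced
by `e^{-2(1+t)η²}`; this makes the bound uniform as `t → 0`. -/
lemma sym_L1 {P : ℝ → ℂ} (hPc : Continuous P) (hre : ∀ η, (P η).re = -2 * η ^ 2) (n : ℕ)
    {a : ℝ → ℂ} (hac : Continuous a) (has : HasCompactSupport a) :
    ∃ C : ℝ, 0 ≤ C ∧ ∀ t : ℝ, 0 < t → Integrable (sym P n a t) ∧
      Real.sqrt (1 + t) ^ (n + 1) * ∫ η, ‖sym P n a t η‖ ≤ C := by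
  obtain ⟨M, hM⟩ : ∃ M, ∀ η : ℝ, ‖a η * (Real.exp (2 * η ^ 2) : ℂ)‖ ≤ M :=
    (has.mul_right (f' := fun η : ℝ => (Real.exp (2 * η ^ 2) : ℂ))).exists_bound_of_continuous
      (by fun_prop)
  have hM0 : 0 ≤ M := (norm_nonneg _).trans (hM 0)
  set D : ℝ := M * (n.factorial * Real.exp 1) with hD
  refine ⟨D * Real.sqrt Real.pi, by positivity, fun t ht => ?_⟩
  set S := Real.sqrt (1 + t) with hS
  have hS0 : 0 < S := Real.sqrt_pos.2 (by linarith)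
  have hS2 : S ^ 2 = 1 + t := Real.sq_sqrt (by linarith)
  have hpt : ∀ η, S ^ n * ‖sym P n a t η‖ ≤ D * Real.exp (-(S ^ 2) * η ^ 2) := by
    intro η
    have h1 := pow_le_exp_sq n (x := S * |η|) (by positivity)
    have h2 := hM η
    rw [norm_mul, Complex.norm_real, Real.norm_eq_abs, Real.abs_exp] at h2
    have h3 : Real.exp (t * (-2 * η ^ 2)) =
        Real.exp (2 * η ^ 2) * (Real.exp (-(S ^ 2) * η ^ 2) * Real.exp (-(S ^ 2) * η ^ 2)) := by
      rw [← Real.exp_add, ← Real.exp_add, hS2]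
      congr 1
      ring
    have h4 : Real.exp ((S * |η|) ^ 2) * Real.exp (-(S ^ 2) * η ^ 2) = 1 := by
      rw [← Real.exp_add, mul_pow, sq_abs]
      simp
    rw [sym, norm_mul, norm_mul, norm_pow, Complex.norm_real, Complex.norm_exp,
      Complex.re_ofReal_mul, hre, h3, Real.norm_eq_abs]
    set E := Real.exp (-(S ^ 2) * η ^ 2)
    have hE : 0 < E := Real.exp_pos _
    calc S ^ n * (|η| ^ n * ‖a η‖ * (Real.exp (2 * η ^ 2) * (E * E)))
        = ((S * |η|) ^ n) * (‖a η‖ * Real.exp (2 * η ^ 2)) * (E * E) := by ring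
      _ ≤ (n.factorial * Real.exp 1 * Real.exp ((S * |η|) ^ 2)) * M * (E * E) := by gcongr
      _ = D * E * (Real.exp ((S * |η|) ^ 2) * E) := by rw [hD]; ring
      _ = D * E := by rw [h4, mul_one]
  have hg : Integrable fun η : ℝ => D * Real.exp (-(S ^ 2) * η ^ 2) :=
    (integrable_exp_neg_mul_sq (by positivity)).const_mul D
  have hcont : Continuous (sym P n a t) := by
    unfold sym
    fun_prop
  have hi : Integrable (sym P n a t) := by
    refine hcont.integrable_of_hasCompactSupport ?_
    exact (has.mul_left (f := fun η : ℝ => (η : ℂ) ^ n)).mul_right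
      (f' := fun η : ℝ => Complex.exp (t * P η))
  refine ⟨hi, ?_⟩
  have h5 : S ^ n * ∫ η, ‖sym P n a t η‖ ≤ D * Real.sqrt (Real.pi / S ^ 2) := by
    rw [← integral_const_mul, ← integral_gaussian, ← integral_const_mul]
    exact integral_mono (hi.norm.const_mul _) hg hpt
  rw [Real.sqrt_div Real.pi_pos.le, Real.sqrt_sq hS0.le] at h5
  calc S ^ (n + 1) * ∫ η, ‖sym P n a t η‖ = S * (S ^ n * ∫ η, ‖sym P n a t η‖) := by ring
    _ ≤ S * (D * (Real.sqrt Real.pi / S)) := by gcongr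
    _ = _ := by field_simp

/-- Since `P' = ηq`, differentiating a symbol either costs one power of `η` or gains one power of
`η` together with a factor `t`; for `n = 0` the truncated `n - 1 = 0` loses nothing. -/
lemma sym_deriv {P q : ℝ → ℂ} (hP : ∀ η : ℝ, HasDerivAt P (η * q η) η) (hq : ContDiff ℝ ∞ q)
    (n : ℕ) {a : ℝ → ℂ} (ha : ContDiff ℝ ∞ a) (has : HasCompactSupport a) :
    ∃ a₁ a₂ : ℝ → ℂ, (ContDiff ℝ ∞ a₁ ∧ HasCompactSupport a₁) ∧
      (ContDiff ℝ ∞ a₂ ∧ HasCompactSupport a₂) ∧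
      ∀ t η, HasDerivAt (sym P n a t) (sym P (n - 1) a₁ t η + t * sym P (n + 1) a₂ t η) η := by
  have hid : ContDiff ℝ ∞ (fun η : ℝ => (η : ℂ)) := Complex.ofRealCLM.contDiff
  have hda : ContDiff ℝ ∞ (deriv a) := (contDiff_infty_iff_deriv.1 ha).2
  have hdd : ∀ η, HasDerivAt a (deriv a η) η := fun η =>
    ((contDiff_infty_iff_deriv.1 ha).1 η).hasDerivAt
  have key : ∀ t η : ℝ, HasDerivAt (sym P n a t)
      (((n * (η : ℂ) ^ (n - 1) * 1) * a η + (η : ℂ) ^ n * deriv a η) * Complex.exp (t * P η) +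
        ((η : ℂ) ^ n * a η) * (Complex.exp (t * P η) * (t * (η * q η)))) η := fun t η =>
    (((Complex.ofRealCLM.hasDerivAt (x := η)).fun_pow n).mul (hdd η)).mul
      (((hP η).const_mul (t : ℂ)).cexp)
  cases n with
  | zero =>
    refine ⟨deriv a, fun η => a η * q η, ⟨hda, has.deriv⟩, ⟨ha.mul hq, has.mul_right⟩,
      fun t η => (key t η).congr_deriv ?_⟩
    simp only [sym]
    push_cast
    ring
  | succ m =>
    refine ⟨fun η => (m + 1) * a η + η * deriv a η, fun η => a η * q η,
      ⟨(contDiff_const.mul ha).add (hid.mul hda), (has.mul_left).add (has.deriv.mul_left)⟩,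
      ⟨ha.mul hq, has.mul_right⟩, fun t η => (key t η).congr_deriv ?_⟩
    simp only [sym, Nat.add_sub_cancel]
    push_cast
    ring

/-- The kernel bound `‖∫ ηⁿ a e^{tP} e^{iηy} dη‖_{L¹(dy)} ≲ (1+t)^{-n/2}`. -/
lemma sym_kernel_L1 {P q : ℝ → ℂ} (hP : ∀ η : ℝ, HasDerivAt P (η * q η) η) (hq : ContDiff ℝ ∞ q)
    (hre : ∀ η, (P η).re = -2 * η ^ 2)
    (n : ℕ) {a : ℝ → ℂ} (ha : ContDiff ℝ ∞ a) (has : HasCompactSupport a) :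
    ∃ C : ℝ, 0 ≤ C ∧ ∀ t : ℝ, 0 < t → Integrable (FI (sym P n a t)) ∧
      Real.sqrt (1 + t) ^ n * ∫ y, ‖FI (sym P n a t) y‖ ≤ C := by
  have hPc : Continuous P := continuous_iff_continuousAt.2 fun η => (hP η).continuousAt
  obtain ⟨b, c, ⟨hb, hbs⟩, ⟨hc, hcs⟩, hd⟩ := sym_deriv hP hq n ha has
  obtain ⟨b₁, b₂, ⟨hb₁, hbs₁⟩, ⟨hb₂, hbs₂⟩, hdb⟩ := sym_deriv hP hq (n - 1) hb hbs
  obtain ⟨c₁, c₂, ⟨hc₁, hcs₁⟩, ⟨hc₂, hcs₂⟩, hdc⟩ := sym_deriv hP hq (n + 1) hc hcs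
  have H := fun (m : ℕ) {f : ℝ → ℂ} (hf : ContDiff ℝ ∞ f) (hfs : HasCompactSupport f) =>
    sym_L1 hPc hre m hf.continuous hfs
  obtain ⟨A, hA0, hA⟩ := H n ha has
  obtain ⟨B, hB0, hB⟩ := H (n - 1) hb hbs
  obtain ⟨B', hB0', hB'⟩ := H (n + 1) hc hcs
  obtain ⟨C₁, h10, hC₁⟩ := H (n - 1 - 1) hb₁ hbs₁
  obtain ⟨C₂, h20, hC₂⟩ := H (n - 1 + 1) hb₂ hbs₂
  obtain ⟨C₃, h30, hC₃⟩ := H (n + 1 - 1) hc₁ hcs₁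
  obtain ⟨C₄, h40, hC₄⟩ := H (n + 1 + 1) hc₂ hcs₂
  set D := A + (C₁ + C₂ + C₃ + C₄) with hD
  refine ⟨2 * Real.pi * D, by positivity, fun t ht => ?_⟩
  set S := Real.sqrt (1 + t) with hS
  have hS1 : 1 ≤ S := Real.one_le_sqrt.2 (by linarith)
  have hS0 : 0 < S := by linarith
  have hS2 : S ^ 2 = 1 + t := Real.sq_sqrt (by linarith)
  have htS : t ≤ S ^ 2 := by linarith
  -- every term of the second derivative has `L¹` norm at most `C S² / S ^ (n + 1)`
  have K : ∀ (m k : ℕ) (C x : ℝ), n + 2 * k ≤ m + 2 → 0 ≤ x → S ^ (m + 1) * x ≤ C →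
      t ^ k * x ≤ C / S ^ (n + 1) * S ^ 2 := by
    intro m k C x hmk hx h
    have h1 : t ^ k ≤ S ^ (2 * k) := by
      rw [pow_mul]
      gcongr
    rw [div_mul_eq_mul_div, le_div_iff₀ (by positivity)]
    calc t ^ k * x * S ^ (n + 1) ≤ S ^ (2 * k) * x * S ^ (n + 1) := by gcongr
      _ = S ^ (n + 2 * k + 1) * x := by ring
      _ ≤ S ^ (m + 2 + 1) * x := by gcongr
      _ = (S ^ (m + 1) * x) * S ^ 2 := by ring
      _ ≤ C * S ^ 2 := by gcongr
  have hn : ∀ f : ℝ → ℂ, 0 ≤ ∫ η, ‖f η‖ := fun f => integral_nonneg fun η => norm_nonneg _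
  have k1 := K (n - 1 - 1) 0 C₁ _ (by omega) (hn _) (hC₁ t ht).2
  have k2 := K (n - 1 + 1) 1 C₂ _ (by omega) (hn _) (hC₂ t ht).2
  have k3 := K (n + 1 - 1) 1 C₃ _ (by omega) (hn _) (hC₃ t ht).2
  have k4 := K (n + 1 + 1) 2 C₄ _ (by omega) (hn _) (hC₄ t ht).2
  have i1 := (hC₁ t ht).1
  have i2 := (hC₂ t ht).1.const_mul (t : ℂ)
  have i3 := (hC₃ t ht).1.const_mul (t : ℂ)
  have i4 := (hC₄ t ht).1.const_mul ((t : ℂ) ^ 2)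
  have main := FI_L1_le (A := D / S ^ (n + 1)) (S := S) (hA t ht).1
    ((hB t ht).1.add ((hB' t ht).1.const_mul (t : ℂ)))
    (((i1.add i2).add i3).add i4) (hd t)
    (fun η => ((hdb t η).add ((hdc t η).const_mul (t : ℂ))).congr_deriv (by
      simp only [Pi.add_apply]
      ring)) hS0
    (by
      rw [le_div_iff₀ (by positivity), mul_comm]
      exact (hA t ht).2.trans (by rw [hD]; linarith))
    (by
      have ti : ∀ η, ‖(((sym P (n - 1 - 1) b₁ t + fun η => t * sym P (n - 1 + 1) b₂ t η) +
          fun η => t * sym P (n + 1 - 1) c₁ t η) +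
          fun η => (t : ℂ) ^ 2 * sym P (n + 1 + 1) c₂ t η) η‖ ≤
          ‖sym P (n - 1 - 1) b₁ t η‖ + t ^ 1 * ‖sym P (n - 1 + 1) b₂ t η‖ +
          t ^ 1 * ‖sym P (n + 1 - 1) c₁ t η‖ + t ^ 2 * ‖sym P (n + 1 + 1) c₂ t η‖ := by
        intro η
        refine norm_add₄_le.trans (le_of_eq ?_)
        simp [abs_of_pos ht]
      have j1 := i1.norm
      have j2 := (hC₂ t ht).1.norm.const_mul (t ^ 1)
      have j3 := (hC₃ t ht).1.norm.const_mul (t ^ 1)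
      have j4 := (hC₄ t ht).1.norm.const_mul (t ^ 2)
      refine (integral_mono (((i1.add i2).add i3).add i4).norm
        (((j1.add j2).add j3).add j4) ti).trans ?_
      rw [integral_add' ((j1.add j2).add j3) j4, integral_add' (j1.add j2) j3, integral_add' j1 j2,
        integral_const_mul, integral_const_mul, integral_const_mul]
      have : (C₁ + C₂ + C₃ + C₄) / S ^ (n + 1) * S ^ 2 ≤ D / S ^ (n + 1) * S ^ 2 := by
        gcongr
        linarith
      rw [pow_zero, one_mul] at k1
      refine le_trans ?_ this
      rw [add_div, add_div, add_div, add_mul, add_mul, add_mul]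
      linarith)
  refine ⟨main.1, ?_⟩
  calc S ^ n * ∫ y, ‖FI (sym P n a t) y‖ ≤ S ^ n * (2 * Real.pi * (D / S ^ (n + 1)) * S) := by
        gcongr
        exact main.2
    _ = 2 * Real.pi * D := by
        field_simp
        ring

/-! ### The dispersion relation -/

lemma omg_coeff_pos : 0 < 8 * mu3 - 1 := by
  unfold mu3
  nlinarith [sq_nonneg Real.pi]

lemma omg_arg_pos (η : ℝ) : 0 < 16 + (8 * mu3 - 1) * η ^ 2 := by
  have := omg_coeff_pos
  positivity

lemma omg_pos (η : ℝ) : 0 < omg η := Real.sqrt_pos.2 (omg_arg_pos η)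

lemma omg_sq (η : ℝ) : omg η ^ 2 = 16 + (8 * mu3 - 1) * η ^ 2 := Real.sq_sqrt (omg_arg_pos η).le

lemma omg_contDiff : ContDiff ℝ ∞ omg :=
  ContDiff.sqrt (by fun_prop) fun η => (omg_arg_pos η).ne'

lemma omg_hasDerivAt (η : ℝ) : HasDerivAt omg ((8 * mu3 - 1) * η / omg η) η := by
  have h : HasDerivAt (fun η : ℝ => 16 + (8 * mu3 - 1) * η ^ 2) ((8 * mu3 - 1) * (2 * η)) η := by
    simpa using ((hasDerivAt_pow 2 η).const_mul (8 * mu3 - 1)).const_add 16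
  refine (h.sqrt (omg_arg_pos η).ne').congr_deriv ?_
  change _ / (2 * omg η) = _
  field_simp

/-- The phase `-2η² + iση(ω(η) - 4)`: the linear part `4iση` of `iσηω(η)` has been removed, since
it only translates the kernel. -/
def phs (σ : ℝ) (η : ℝ) : ℂ :=
  ((-2 * η ^ 2 : ℝ) : ℂ) + ((σ * (η * (omg η - 4)) : ℝ) : ℂ) * Complex.I

/-- The quotient `P'(η)/η` for `P = phs σ`, written as a smooth function. -/
def phsq (σ : ℝ) (η : ℝ) : ℂ :=
  ((-4 : ℝ) : ℂ) +
    ((σ * ((8 * mu3 - 1) * η * ((omg η + 4)⁻¹ + (omg η)⁻¹)) : ℝ) : ℂ) * Complex.I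

lemma phs_re (σ η : ℝ) : (phs σ η).re = -2 * η ^ 2 := by
  rw [phs, Complex.add_re, Complex.re_ofReal_mul, Complex.ofReal_re, Complex.I_re]
  ring

lemma phsq_contDiff (σ : ℝ) : ContDiff ℝ ∞ (phsq σ) := by
  have h1 : ContDiff ℝ ∞ fun η => (omg η)⁻¹ := omg_contDiff.inv fun η => (omg_pos η).ne'
  have h2 : ContDiff ℝ ∞ fun η => (omg η + 4)⁻¹ :=
    (omg_contDiff.add contDiff_const).inv fun η => by linarith [omg_pos η]
  have h3 : ContDiff ℝ ∞ fun η : ℝ => σ * ((8 * mu3 - 1) * η * ((omg η + 4)⁻¹ + (omg η)⁻¹)) := by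
    fun_prop
  exact contDiff_const.add ((Complex.ofRealCLM.contDiff.comp h3).mul contDiff_const)

lemma phs_hasDerivAt (σ η : ℝ) : HasDerivAt (phs σ) (η * phsq σ η) η := by
  have h1 : HasDerivAt (fun η : ℝ => -2 * η ^ 2) (-2 * (2 * η)) η := by
    simpa using (hasDerivAt_pow 2 η).const_mul (-2)
  have h2 := ((hasDerivAt_id η).mul ((omg_hasDerivAt η).sub_const 4)).const_mul σ
  refine (h1.ofReal_comp.add (h2.ofReal_comp.mul_const Complex.I)).congr_deriv ?_
  have hw := omg_pos η
  have e : σ * (1 * (omg η - 4) + id η * ((8 * mu3 - 1) * η / omg η)) =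
      η * (σ * ((8 * mu3 - 1) * η * ((omg η + 4)⁻¹ + (omg η)⁻¹))) := by
    have : omg η - 4 = (8 * mu3 - 1) * η ^ 2 * (omg η + 4)⁻¹ := by
      rw [← div_eq_mul_inv, eq_div_iff (by linarith)]
      linear_combination omg_sq η
    rw [this, id]
    ring
  rw [e, phsq]
  push_cast
  ring

lemma FI_shift (f : ℝ → ℂ) (s y : ℝ) :
    FI (fun η => f η * Complex.exp (Complex.I * ((η * s : ℝ) : ℂ))) y = FI f (y + s) := by
  unfold FI
  congr 1
  ext η
  rw [mul_assoc, ← Complex.exp_add]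
  congr 2
  push_cast
  ring

lemma sym_phs (σ : ℝ) (n : ℕ) (a : ℝ → ℂ) (t η : ℝ) :
    sym (phs σ) n a t η * Complex.exp (Complex.I * ((η * (4 * σ * t) : ℝ) : ℂ)) =
      (η : ℂ) ^ n * a η * (Real.exp (-2 * t * η ^ 2) : ℂ) *
        Complex.exp (((σ * (t * η * omg η) : ℝ) : ℂ) * Complex.I) := by
  rw [sym, phs, Complex.ofReal_exp, mul_assoc, mul_assoc ((η : ℂ) ^ n * a η), ← Complex.exp_add,
    ← Complex.exp_add]
  congr 2
  push_cast
  ring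

/-! ### The kernels -/

/-- The decay estimate for any kernel whose `k`-th derivative has symbol
`ηⁿ a(η) e^{-2tη²} (κ₁ e^{itηω} + κ₂ e^{-itηω})`. -/
lemma kernel_L1 (n k : ℕ) {a : ℝ → ℂ} (ha : ContDiff ℝ ∞ a) (has : HasCompactSupport a)
    (κ₁ κ₂ : ℂ) (R : ℝ) :
    ∃ C : ℝ, 0 ≤ C ∧ ∀ t : ℝ, 0 < t → ∀ g : ℝ → ℝ, Measurable g → (∃ M, ∀ η, |g η| ≤ M) →
      (∀ η, R ≤ |η| → g η = 0) →
      (∀ η : ℝ, (Complex.I * η) ^ k * (g η : ℂ) =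
        (η : ℂ) ^ n * a η * (Real.exp (-2 * t * η ^ 2) : ℂ) *
          (κ₁ * Complex.exp (((t * η * omg η : ℝ) : ℂ) * Complex.I) +
            κ₂ * Complex.exp (-((t * η * omg η : ℝ) : ℂ) * Complex.I))) →
      Real.sqrt (1 + t) ^ n * L1norm (iteratedDeriv k (Kft g)) ≤ C := by
  have hc : ∀ σ, Continuous (phs σ) := fun σ =>
    continuous_iff_continuousAt.2 fun η => (phs_hasDerivAt σ η).continuousAt
  have H := fun σ => sym_kernel_L1 (phs_hasDerivAt σ) (phsq_contDiff σ) (phs_re σ) n ha has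
  obtain ⟨C₁, h10, hC₁⟩ := H 1
  obtain ⟨C₂, h20, hC₂⟩ := H (-1)
  refine ⟨‖(2 * Real.pi : ℂ)⁻¹‖ * (‖κ₁‖ * C₁ + ‖κ₂‖ * C₂), by positivity,
    fun t ht g hm ⟨M, hM⟩ hR he => ?_⟩
  have hi : ∀ σ, Integrable (sym (phs σ) n a t) := fun σ => by
    obtain ⟨_, -, h⟩ := sym_L1 (hc σ) (phs_re σ) n ha.continuous has
    exact (h t ht).1
  have hexp : ∀ s y : ℝ, ‖Complex.exp (Complex.I * ((s * y : ℝ) : ℂ))‖ = 1 := fun s y => by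
    rw [mul_comm, Complex.norm_exp_ofReal_mul_I]
  have hi' : ∀ σ y, Integrable fun η : ℝ => (sym (phs σ) n a t η *
      Complex.exp (Complex.I * ((η * (4 * σ * t) : ℝ) : ℂ))) *
      Complex.exp (Complex.I * ((η * y : ℝ) : ℂ)) := fun σ y =>
    ((hi σ).mul_bdd (c := 1) (by fun_prop)
      (Filter.Eventually.of_forall fun η => (hexp _ _).le)).mul_bdd (c := 1) (by fun_prop)
      (Filter.Eventually.of_forall fun η => (hexp _ _).le)
  have hF : ∀ y, iteratedDeriv k (Kft g) y = (2 * Real.pi : ℂ)⁻¹ *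
      (κ₁ * FI (sym (phs 1) n a t) (y + 4 * 1 * t) +
        κ₂ * FI (sym (phs (-1)) n a t) (y + 4 * (-1) * t)) := by
    intro y
    rw [iteratedDeriv_Kft hm hM hR, ← FI_shift, ← FI_shift]
    congr 1
    unfold FI
    rw [← integral_const_mul, ← integral_const_mul,
      ← integral_add ((hi' 1 y).const_mul _) ((hi' (-1) y).const_mul _)]
    congr 1
    ext η
    beta_reduce
    rw [he, sym_phs, sym_phs, one_mul, neg_one_mul, Complex.ofReal_neg]
    ring
  have j1 := ((hC₁ t ht).1.comp_add_right (4 * 1 * t)).norm.const_mul ‖κ₁‖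
  have j2 := ((hC₂ t ht).1.comp_add_right (4 * (-1) * t)).norm.const_mul ‖κ₂‖
  have hle : L1norm (iteratedDeriv k (Kft g)) ≤ ‖(2 * Real.pi : ℂ)⁻¹‖ *
      (‖κ₁‖ * (∫ y, ‖FI (sym (phs 1) n a t) y‖) +
        ‖κ₂‖ * ∫ y, ‖FI (sym (phs (-1)) n a t) y‖) := by
    rw [← integral_add_right_eq_self (fun y => ‖FI (sym (phs 1) n a t) y‖) (4 * 1 * t),
      ← integral_add_right_eq_self (fun y => ‖FI (sym (phs (-1)) n a t) y‖) (4 * (-1) * t),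
      ← integral_const_mul, ← integral_const_mul, ← integral_add j1 j2, ← integral_const_mul]
    refine integral_mono_of_nonneg (Filter.Eventually.of_forall fun y => norm_nonneg _)
      ((j1.add j2).const_mul _) (Filter.Eventually.of_forall fun y => ?_)
    beta_reduce
    rw [hF, norm_mul]
    gcongr
    refine (norm_add_le _ _).trans (le_of_eq ?_)
    rw [norm_mul, norm_mul]
  have b1 := (hC₁ t ht).2
  have b2 := (hC₂ t ht).2
  set S := Real.sqrt (1 + t)
  calc S ^ n * L1norm (iteratedDeriv k (Kft g))
      ≤ S ^ n * (‖(2 * Real.pi : ℂ)⁻¹‖ * (‖κ₁‖ * (∫ y, ‖FI (sym (phs 1) n a t) y‖) +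
        ‖κ₂‖ * ∫ y, ‖FI (sym (phs (-1)) n a t) y‖)) := by gcongr
    _ = ‖(2 * Real.pi : ℂ)⁻¹‖ * (‖κ₁‖ * (S ^ n * ∫ y, ‖FI (sym (phs 1) n a t) y‖) +
        ‖κ₂‖ * (S ^ n * ∫ y, ‖FI (sym (phs (-1)) n a t) y‖)) := by ring
    _ ≤ _ := by gcongr

lemma jb_rpow_ge (j : ℕ) {t : ℝ} (ht : 0 < t) :
    1 / Real.sqrt (1 + t) ^ (j + 1) ≤ jb t ^ (-((j : ℝ) + 1) / 2) := by
  have hj : 0 < jb t := Real.sqrt_pos.2 (by positivity)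
  have hle : jb t ≤ 1 + t := Real.sqrt_le_iff.2 ⟨by positivity, by nlinarith⟩
  have e : Real.sqrt (1 + t) ^ (j + 1) = (1 + t) ^ (((j : ℝ) + 1) / 2) := by
    rw [Real.sqrt_eq_rpow, ← Real.rpow_mul_natCast (by positivity)]
    congr 1
    push_cast
    ring
  rw [neg_div, Real.rpow_neg hj.le, ← one_div, e]
  gcongr

/-- `L¹` decay estimates for derivatives of the kernels `K₁`, `K₂`, `K₃`. -/
theorem K_deriv_L1_estimates (η₀ : ℝ) (hη₀ : 0 < η₀) (χ : ℝ → ℝ) (hχ : IsCutoff η₀ χ)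
    (j : ℕ) :
    ∃ C : ℝ, 0 < C ∧ ∀ t : ℝ, 0 < t →
      L1norm (iteratedDeriv (j + 1) (K1 χ t)) + L1norm (iteratedDeriv j (K2 χ t))
          + L1norm (iteratedDeriv (j + 2) (K3 χ t))
        ≤ C * jb t ^ (-((j : ℝ) + 1) / 2) := by
  obtain ⟨hsm, h01, -, hz⟩ := hχ
  have hs : HasCompactSupport χ := by
    refine HasCompactSupport.intro (isCompact_Icc (a := -(3 * η₀ / 4)) (b := 3 * η₀ / 4))
      fun η hη => hz η ?_
    by_contra! h
    exact hη (abs_le.1 h.le)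
  have hoc : Continuous omg := omg_contDiff.continuous
  have hom : Measurable omg := hoc.measurable
  have hχc : Continuous χ := hsm.continuous
  have hχm : Measurable χ := hχc.measurable
  have up : ∀ f : ℝ → ℝ, ContDiff ℝ ∞ f → HasCompactSupport f →
      ContDiff ℝ ∞ (fun η => (f η : ℂ)) ∧ HasCompactSupport (fun η => (f η : ℂ)) := fun f hf hfs =>
    ⟨Complex.ofRealCLM.contDiff.comp hf, hfs.comp_left (g := fun x : ℝ => (x : ℂ)) (by simp)⟩
  have u1 := up χ hsm hs
  have u2 := up (fun η => χ η * (omg η)⁻¹)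
    (hsm.mul (omg_contDiff.inv fun η => (omg_pos η).ne')) hs.mul_right
  have u3 := up (fun η => χ η * omg η) (hsm.mul omg_contDiff) hs.mul_right
  obtain ⟨C₁, h10, hC₁⟩ := kernel_L1 (j + 1) (j + 1) u1.1 u1.2
    (Complex.I ^ (j + 1) / 2) (Complex.I ^ (j + 1) / 2) (3 * η₀ / 4)
  obtain ⟨C₂, h20, hC₂⟩ := kernel_L1 (j + 1) j u2.1 u2.2
    (-(Complex.I ^ j * Complex.I / 2)) (Complex.I ^ j * Complex.I / 2) (3 * η₀ / 4)
  obtain ⟨C₃, h30, hC₃⟩ := kernel_L1 (j + 1) (j + 2) u3.1 u3.2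
    (-(Complex.I ^ (j + 2) * Complex.I / 2)) (Complex.I ^ (j + 2) * Complex.I / 2) (3 * η₀ / 4)
  refine ⟨C₁ + C₂ + C₃ + 1, by positivity, fun t ht => ?_⟩
  have b1 := hC₁ t ht (fun η => χ η * Real.exp (-2 * t * η ^ 2) * Real.cos (t * η * omg η))
    (by fun_prop)
    ((hs.mul_right.mul_right).exists_bound_of_continuous (by fun_prop))
    (fun η hη => by simp [hz η hη])
    (fun η => by
      push_cast [Complex.cos]
      ring)
  have b2 := hC₂ t ht
    (fun η => Real.exp (-2 * t * η ^ 2) * (η * χ η / omg η) * Real.sin (t * η * omg η))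
    (by fun_prop)
    (by
      have hc : Continuous fun η =>
          Real.exp (-2 * t * η ^ 2) * (η * χ η * (omg η)⁻¹) * Real.sin (t * η * omg η) := by
        have hinv := hoc.inv₀ fun η => (omg_pos η).ne'
        exact (Continuous.mul (by fun_prop) ((continuous_id.mul hχc).mul hinv)).mul (by fun_prop)
      exact (hs.mul_left.mul_right.mul_left.mul_right).exists_bound_of_continuous hc)
    (fun η hη => by simp [hz η hη])
    (fun η => by
      push_cast [Complex.sin]
      ring)
  have b3 := hC₃ t ht
    (fun η => Real.exp (-2 * t * η ^ 2) * (χ η * omg η / η) * Real.sin (t * η * omg η))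
    (by fun_prop)
    (by
      -- the singularity at `η = 0` is removable because `|sin x| ≤ |x|`
      obtain ⟨M, hM⟩ := (hs.mul_right (f' := fun η => t * omg η ^ 2)).exists_bound_of_continuous
        (by fun_prop)
      refine ⟨M, fun η => le_trans ?_ (hM η)⟩
      have e1 : |Real.exp (-2 * t * η ^ 2)| ≤ 1 := by
        rw [Real.abs_exp, Real.exp_le_one_iff]
        nlinarith [mul_nonneg ht.le (sq_nonneg η)]
      have e2 : |Real.sin (t * η * omg η)| ≤ |t * η * omg η| := Real.abs_sin_le_abs
      have e3 : |χ η * omg η / η| * |t * η * omg η| ≤ |χ η * (t * omg η ^ 2)| := by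
        rcases eq_or_ne η 0 with rfl | h0
        · rw [div_zero, abs_zero, zero_mul]
          positivity
        · rw [← abs_mul]
          refine le_of_eq (congrArg _ ?_)
          field_simp
      rw [abs_mul, abs_mul, Pi.mul_apply, Real.norm_eq_abs]
      calc _ ≤ 1 * |χ η * omg η / η| * |t * η * omg η| := by gcongr
        _ ≤ _ := by rw [one_mul]; exact e3)
    (fun η hη => by simp [hz η hη])
    (fun η => by
      -- also valid at `η = 0`, where division gives `0` and both sides vanish
      have e : (η : ℂ) ^ (j + 2) * (η : ℂ)⁻¹ = (η : ℂ) ^ (j + 1) := by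
        rcases eq_or_ne (η : ℂ) 0 with h | h
        · simp [h]
        · rw [pow_succ, mul_assoc, mul_inv_cancel₀ h, mul_one]
      rw [mul_pow]
      push_cast [Complex.sin]
      rw [← e]
      ring)
  change _ * L1norm (iteratedDeriv (j + 1) (K1 χ t)) ≤ _ at b1
  change _ * L1norm (iteratedDeriv j (K2 χ t)) ≤ _ at b2
  change _ * L1norm (iteratedDeriv (j + 2) (K3 χ t)) ≤ _ at b3
  have hS : 0 < Real.sqrt (1 + t) ^ (j + 1) := by positivity
  calc _ ≤ (C₁ + C₂ + C₃ + 1) * (1 / Real.sqrt (1 + t) ^ (j + 1)) := by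
        rw [mul_one_div, le_div_iff₀ hS]
        linarith
    _ ≤ _ := by
        gcongr
        exact jb_rpow_ge j ht
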